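/- Let Y and X₁,…,X_m be {−1,+1}-valued random variables on a common probability space with arbitrary joint distribution, and let E_j = 1 if X_j ≠ Y and E_j = 0 otherwise. For any subset S ⊆ {1,…,m} and any j ∉ S, the marginal information gain Δ(j|S) := I(Y; X_j | X_S) satisfies the decomposition Δ(j|S) = I(Y; X_j) − I(X_j; X_S) + I(E_j; E_S) + Λ_j(S), where Λ_j(S) := I(E_j; Y | E_S) − I(E_j; Y). -/

import Mathlib

open MeasureTheory ProbabilityTheory

/-- Shannon entropy (in nats) of a discrete random variable `X`:
`H(X) = ∑ₐ -P(X = a) log P(X = a)`, with the convention `0 log 0 = 0`. -/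
noncomputable def shannonEntropy {Ω : Type*} [MeasureSpace Ω] {A : Type*}
    (X : Ω → A) : ℝ :=
  ∑' a : A, Real.negMulLog ((ℙ {ω | X ω = a}).toReal)

/-- Shannon mutual information of discrete random variables:
`I(X;Y) = H(X) + H(Y) - H(X,Y)`. -/
noncomputable def mutualInfo {Ω : Type*} [MeasureSpace Ω] {A B : Type*}
    (X : Ω → A) (Y : Ω → B) : ℝ :=
  shannonEntropy X + shannonEntropy Y - shannonEntropy (fun ω => (X ω, Y ω))

/-- Conditional mutual information of discrete random variables:
`I(X;Y|Z) = H(X,Z) + H(Y,Z) - H(X,Y,Z) - H(Z)`. -/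
noncomputable def condMutualInfo {Ω : Type*} [MeasureSpace Ω] {A B C : Type*}
    (X : Ω → A) (Y : Ω → B) (Z : Ω → C) : ℝ :=
  shannonEntropy (fun ω => (X ω, Z ω)) + shannonEntropy (fun ω => (Y ω, Z ω))
    - shannonEntropy (fun ω => (X ω, Y ω, Z ω)) - shannonEntropy Z

/-- Conditional entropy of discrete random variables: `H(X|Z) = H(X,Z) - H(Z)`. -/
noncomputable def condEntropy {Ω : Type*} [MeasureSpace Ω] {A C : Type*}
    (X : Ω → A) (Z : Ω → C) : ℝ :=
  shannonEntropy (fun ω => (X ω, Z ω)) - shannonEntropy Z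

/-- The error indicator of a prediction `X` against the label `Y`:
`E = 1` if `X ≠ Y` and `E = 0` otherwise. -/
def errInd {Ω : Type*} (Y X : Ω → ℤ) (ω : Ω) : ℕ :=
  if X ω ≠ Y ω then 1 else 0

/-!
Given `Y`, the variables `X_j` and `E_j` determine each other, because only one answer is wrong;
hence `I(X_j; X_S | Y) = I(E_j; E_S | Y)`. Since `I(A; B | C) - I(A; B)` is symmetric in `A`, `B`,
`C`, the left side of this equality is `Δ(j|S) - I(Y; X_j) + I(X_j; X_S)` and the right side is
`I(E_j; E_S) + Λ_j(S)`.
-/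

section SameInfoGiven

variable {Ω A B C B' C' : Type*}

/-- `X` and `E` carry the same information given `Y`: on each fibre of `Y` they induce the same
partition of `Ω`, so each is a function of the other there. The condition is imposed at every point
of `Ω`, not merely almost surely. -/
def SameInfoGiven (Y : Ω → A) (X : Ω → B) (E : Ω → B') : Prop :=
  ∀ ⦃ω ω'⦄, Y ω = Y ω' → (X ω = X ω' ↔ E ω = E ω')

namespace SameInfoGiven

variable {Y : Ω → A} {X : Ω → B} {E : Ω → B'} {Z : Ω → C} {F : Ω → C'}

theorem prodMk (hXE : SameInfoGiven Y X E) (hZF : SameInfoGiven Y Z F) :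
    SameInfoGiven Y (fun ω => (X ω, Z ω)) (fun ω => (E ω, F ω)) := fun _ _ hY => by
  simp only [Prod.mk.injEq, hXE hY, hZF hY]

theorem pi {ι : Type*} {β β' : ι → Type*} {X : ∀ i, Ω → β i} {E : ∀ i, Ω → β' i}
    (h : ∀ i, SameInfoGiven Y (X i) (E i)) :
    SameInfoGiven Y (fun ω i => X i ω) (fun ω i => E i ω) := fun _ _ hY => by
  simp only [funext_iff, h _ hY]

end SameInfoGiven

theorem sameInfoGiven_errInd {a b : ℤ} {Y X : Ω → ℤ}
    (hY : ∀ ω, Y ω = a ∨ Y ω = b) (hX : ∀ ω, X ω = a ∨ X ω = b) :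
    SameInfoGiven Y X (errInd Y X) := by
  intro ω ω' hYY
  have eq_iff_correct_iff : X ω = X ω' ↔ (X ω = Y ω ↔ X ω' = Y ω) := by
    grind
  have errInd_eq_iff : errInd Y X ω = errInd Y X ω' ↔ (X ω = Y ω ↔ X ω' = Y ω) := by
    grind [errInd]
  rw [eq_iff_correct_iff, errInd_eq_iff]

end SameInfoGiven

section Entropy

variable {Ω : Type*} [MeasureSpace Ω] {A B C B' C' : Type*}

theorem shannonEntropy_comp_of_injective (X : Ω → A) {f : A → B} (hf : Function.Injective f) :
    shannonEntropy (f ∘ X) = shannonEntropy X := by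
  have support_subset :
      (Function.support fun b => Real.negMulLog (ℙ {ω | (f ∘ X) ω = b}).toReal) ⊆ Set.range f := by
    intro b hb
    by_contra hbf
    have preimage_empty : {ω | (f ∘ X) ω = b} = ∅ :=
      Set.eq_empty_of_forall_notMem fun ω hω => hbf ⟨X ω, hω⟩
    refine hb ?_
    simp only [preimage_empty, measure_empty, ENNReal.toReal_zero, Real.negMulLog_zero]
  unfold shannonEntropy
  rw [← hf.tsum_eq support_subset]
  simp only [Function.comp_apply, hf.eq_iff]

theorem shannonEntropy_eq_of_ker_eq {X : Ω → A} {Z : Ω → B} (h : Setoid.ker X = Setoid.ker Z) :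
    shannonEntropy X = shannonEntropy Z :=
  calc shannonEntropy X
      = shannonEntropy (Quotient.mk (Setoid.ker X)) :=
        shannonEntropy_comp_of_injective (Quotient.mk (Setoid.ker X)) (Setoid.kerLift_injective X)
    _ = shannonEntropy (Quotient.mk (Setoid.ker Z)) := by rw [h]
    _ = shannonEntropy Z :=
        (shannonEntropy_comp_of_injective (Quotient.mk (Setoid.ker Z))
          (Setoid.kerLift_injective Z)).symm

theorem shannonEntropy_prodMk_comm (X : Ω → A) (Y : Ω → B) :
    shannonEntropy (fun ω => (X ω, Y ω)) = shannonEntropy (fun ω => (Y ω, X ω)) :=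
  (shannonEntropy_comp_of_injective _ Prod.swap_injective).symm

theorem shannonEntropy_prodMk_left_comm (X : Ω → A) (Y : Ω → B) (Z : Ω → C) :
    shannonEntropy (fun ω => (X ω, Y ω, Z ω)) = shannonEntropy (fun ω => (Y ω, X ω, Z ω)) :=
  shannonEntropy_eq_of_ker_eq <| Setoid.ext fun _ _ => by
    simp only [Setoid.ker_def, Prod.mk.injEq, and_left_comm]

theorem mutualInfo_comm (X : Ω → A) (Y : Ω → B) : mutualInfo X Y = mutualInfo Y X := by
  unfold mutualInfo
  rw [shannonEntropy_prodMk_comm X Y, add_comm (shannonEntropy X)]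

theorem condMutualInfo_comm (X : Ω → A) (Y : Ω → B) (Z : Ω → C) :
    condMutualInfo X Y Z = condMutualInfo Y X Z := by
  unfold condMutualInfo
  rw [shannonEntropy_prodMk_left_comm X Y Z, add_comm (shannonEntropy fun ω => (X ω, Z ω))]

theorem condMutualInfo_sub_mutualInfo_rotate (X : Ω → A) (Y : Ω → B) (Z : Ω → C) :
    condMutualInfo X Y Z - mutualInfo X Y = condMutualInfo Y Z X - mutualInfo Y Z := by
  have triple_rotate : shannonEntropy (fun ω => (X ω, Y ω, Z ω))
      = shannonEntropy (fun ω => (Y ω, Z ω, X ω)) :=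
    shannonEntropy_eq_of_ker_eq <| Setoid.ext fun _ _ => by
      simpa only [Setoid.ker_def, Prod.mk.injEq] using and_rotate
  unfold condMutualInfo mutualInfo
  rw [triple_rotate, shannonEntropy_prodMk_comm X Y, shannonEntropy_prodMk_comm X Z]
  ring

namespace SameInfoGiven

variable {Y : Ω → A} {X : Ω → B} {E : Ω → B'} {Z : Ω → C} {F : Ω → C'}

theorem shannonEntropy_prodMk_eq (h : SameInfoGiven Y X E) :
    shannonEntropy (fun ω => (X ω, Y ω)) = shannonEntropy (fun ω => (E ω, Y ω)) :=
  shannonEntropy_eq_of_ker_eq <| Setoid.ext fun _ _ => by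
    simpa only [Setoid.ker_def, Prod.mk.injEq] using and_congr_left fun hY => h hY

theorem condMutualInfo_eq (hXE : SameInfoGiven Y X E) (hZF : SameInfoGiven Y Z F) :
    condMutualInfo X Z Y = condMutualInfo E F Y := by
  have triple_eq : shannonEntropy (fun ω => (X ω, Z ω, Y ω))
      = shannonEntropy (fun ω => (E ω, F ω, Y ω)) :=
    shannonEntropy_eq_of_ker_eq <| Setoid.ext fun _ _ => by
      simpa only [Setoid.ker_def, Prod.mk.injEq, and_assoc] using
        and_congr_left fun hY => hXE.prodMk hZF hY
  unfold condMutualInfo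
  rw [hXE.shannonEntropy_prodMk_eq, hZF.shannonEntropy_prodMk_eq, triple_eq]

end SameInfoGiven

end Entropy

theorem marginal_gain_decomposition_general
    {Ω : Type*} [MeasureSpace Ω] [IsProbabilityMeasure (ℙ : Measure Ω)]
    {A B C B' C' : Type*} {Y : Ω → A} {X : Ω → B} {E : Ω → B'} {Z : Ω → C} {F : Ω → C'}
    (hXE : SameInfoGiven Y X E) (hZF : SameInfoGiven Y Z F) :
    condMutualInfo Y X Z
      = mutualInfo Y X - mutualInfo X Z + mutualInfo E F
        + (condMutualInfo E Y F - mutualInfo E Y) :=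
  calc condMutualInfo Y X Z
      = mutualInfo Y X - mutualInfo X Z + condMutualInfo X Z Y := by
        linarith [condMutualInfo_sub_mutualInfo_rotate Y X Z]
    _ = mutualInfo Y X - mutualInfo X Z + condMutualInfo E F Y := by
        rw [hXE.condMutualInfo_eq hZF]
    _ = mutualInfo Y X - mutualInfo X Z + mutualInfo E F
          + (condMutualInfo E Y F - mutualInfo E Y) := by
        rw [condMutualInfo_comm E Y F, mutualInfo_comm E Y,
          condMutualInfo_sub_mutualInfo_rotate Y E F]
        ring

/-- **Accuracy–Redundancy–Error decomposition.**
Let `Y` and `X₁,…,X_m` be `{-1,+1}`-valued random variables with arbitrary joint law and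
error indicators `E_j = 1{X_j ≠ Y}`.  For any `S ⊆ {1,…,m}` and `j ∉ S`, the marginal
information gain `Δ(j|S) = I(Y; X_j | X_S)` decomposes as
`Δ(j|S) = I(Y;X_j) - I(X_j;X_S) + I(E_j;E_S) + Λ_j(S)` with
`Λ_j(S) = I(E_j;Y|E_S) - I(E_j;Y)`. -/
theorem marginal_gain_decomposition
    {Ω : Type*} [MeasureSpace Ω] [IsProbabilityMeasure (ℙ : Measure Ω)]
    {m : ℕ} (Y : Ω → ℤ) (X : Fin m → Ω → ℤ)
    (hYm : Measurable Y) (hXm : ∀ j, Measurable (X j))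
    (hYval : ∀ ω, Y ω = 1 ∨ Y ω = -1)
    (hXval : ∀ j ω, X j ω = 1 ∨ X j ω = -1)
    (S : Finset (Fin m)) (j : Fin m) (hj : j ∉ S) :
    condMutualInfo Y (X j) (fun ω => fun i : {i : Fin m // i ∈ S} => X i.1 ω)
      = mutualInfo Y (X j)
        - mutualInfo (X j) (fun ω => fun i : {i : Fin m // i ∈ S} => X i.1 ω)
        + mutualInfo (errInd Y (X j))
            (fun ω => fun i : {i : Fin m // i ∈ S} => errInd Y (X i.1) ω)
        + (condMutualInfo (errInd Y (X j)) Y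
              (fun ω => fun i : {i : Fin m // i ∈ S} => errInd Y (X i.1) ω)
            - mutualInfo (errInd Y (X j)) Y) :=
  marginal_gain_decomposition_general (sameInfoGiven_errInd hYval (hXval j))
    (.pi fun i => sameInfoGiven_errInd hYval (hXval i.1))
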